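/- Let S be the unilateral shift on ℓ²(ℕ), S* its adjoint, P₀ the orthogonal projection onto the span of e₀, and let c be real with 0 < c < 1. Then the spectrum of the bounded self-adjoint operator T = S + S* − c·P₀ on the complex Hilbert space ℓ²(ℕ) equals the closed real interval [−2, 2], viewed as a subset of ℂ. -/

import Mathlib

/-!
For the inclusion in `[-2, 2]`, the relations `S* S = 1` and `S S* = 1 - P₀` give
`2 - T = (S - 1)* (S - 1) + c P₀` and `2 + T = (S* + 1)* (S* + 1) + (1 - c) P₀`,
so `-2 ≤ T ≤ 2` in the Loewner order since `0 ≤ c ≤ 1`.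

Conversely, for real `|x| ≤ 2` the vector `e₀` is not in the range of `x - T`. If
`(x - T) ξ = e₀`, the coordinates of positive index give `ξ (n + 2) = x ξ (n + 1) - ξ n`,
a recurrence which has no nonzero solution tending to `0`
(`eq_zero_of_recurrence_of_tendsto_zero`); but `ξ = 0` contradicts the coordinate of index `0`.
-/

open ContinuousLinearMap Filter Topology
open scoped ComplexOrder

/-- A solution of the recurrence that tends to zero vanishes. The quadratic form `|u n|² + |u (n + 1)|² - x Re (conj (u n) u (n + 1))` is constant along the
recurrence, hence zero, and it dominates `(|u n| - |u (n + 1)|)²` when `|x| ≤ 2`. So `|u n|` is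
constant. -/
lemma eq_zero_of_recurrence_of_tendsto_zero (u : ℕ → ℂ) (x : ℝ) (hx : x ∈ Set.Icc (-2 : ℝ) 2)
    (hrec : ∀ n, u (n + 2) = x * u (n + 1) - u n) (hu : Tendsto u atTop (𝓝 0)) (n : ℕ) :
    u n = 0 := by
  let Q : ℕ → ℝ := fun n => ‖u n‖ ^ 2 + ‖u (n + 1)‖ ^ 2
    - x * ((u n).re * (u (n + 1)).re + (u n).im * (u (n + 1)).im)
  have hQ : ∀ n, Q n = Q 0 := by
    intro n
    induction n with
    | zero => rfl
    | succ k ih =>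
      rw [← ih]
      simp only [Q, Complex.sq_norm, Complex.normSq_apply, hrec k, Complex.sub_re,
        Complex.sub_im, Complex.re_ofReal_mul, Complex.im_ofReal_mul]
      ring
  have hu1 : Tendsto (fun n => u (n + 1)) atTop (𝓝 0) := (tendsto_add_atTop_iff_nat 1).2 hu
  have hre {v : ℕ → ℂ} (h : Tendsto v atTop (𝓝 0)) :
      Tendsto (fun n => (v n).re) atTop (𝓝 0) := by
    simpa [Function.comp_def] using (Complex.continuous_re.tendsto 0).comp h
  have him {v : ℕ → ℂ} (h : Tendsto v atTop (𝓝 0)) :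
      Tendsto (fun n => (v n).im) atTop (𝓝 0) := by
    simpa [Function.comp_def] using (Complex.continuous_im.tendsto 0).comp h
  have hlim : Tendsto Q atTop (𝓝 0) := by
    simpa using ((hu.norm.pow 2).add (hu1.norm.pow 2)).sub
      ((((hre hu).mul (hre hu1)).add ((him hu).mul (him hu1))).const_mul x)
  have hQ0 : Q 0 = 0 :=
    tendsto_nhds_unique (tendsto_const_nhds.congr fun n => (hQ n).symm) hlim
  have hnorm : ∀ n, ‖u (n + 1)‖ = ‖u n‖ := by
    intro n
    have h0 : Q n = 0 := (hQ n).trans hQ0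
    -- Cauchy-Schwarz for the real inner product on `ℂ`
    have hcs : |(u n).re * (u (n + 1)).re + (u n).im * (u (n + 1)).im|
        ≤ ‖u n‖ * ‖u (n + 1)‖ := by
      refine abs_le_of_sq_le_sq ?_ (by positivity)
      rw [mul_pow, Complex.sq_norm, Complex.sq_norm, Complex.normSq_apply, Complex.normSq_apply]
      nlinarith [sq_nonneg ((u n).re * (u (n + 1)).im - (u n).im * (u (n + 1)).re)]
    have hx2 : |x| ≤ 2 := abs_le.2 hx
    have hle : x * ((u n).re * (u (n + 1)).re + (u n).im * (u (n + 1)).im)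
        ≤ 2 * (‖u n‖ * ‖u (n + 1)‖) := by
      refine (le_abs_self _).trans ?_
      rw [abs_mul]
      exact mul_le_mul hx2 hcs (abs_nonneg _) (by norm_num)
    have hsq : (‖u (n + 1)‖ - ‖u n‖) ^ 2 = 0 := by
      refine le_antisymm ?_ (sq_nonneg _)
      simp only [Q] at h0
      nlinarith
    exact sub_eq_zero.1 (pow_eq_zero_iff (two_ne_zero) |>.1 hsq)
  have hconst : ∀ m, ‖u (m + n)‖ = ‖u n‖ := by
    intro m
    induction m with
    | zero => simp
    | succ k ih => rw [← ih, ← hnorm (k + n)]; congr 2; ring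
  have h := ((tendsto_add_atTop_iff_nat n).2 hu).norm
  simp only [hconst, norm_zero, tendsto_const_nhds_iff] at h
  exact norm_eq_zero.1 h

lemma lp_two_tendsto_zero (ξ : lp (fun _ : ℕ => ℂ) 2) : Tendsto (fun n => ξ n) atTop (𝓝 0) := by
  have h := (lp.memℓp ξ).summable (by norm_num)
  have h1 := h.tendsto_atTop_zero
  simp only [ENNReal.toReal_ofNat, Real.rpow_ofNat] at h1
  have h2 := h1.sqrt
  simp only [Real.sqrt_zero, Real.sqrt_sq (norm_nonneg _)] at h2
  exact tendsto_zero_iff_norm_tendsto_zero.2 h2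

lemma adjoint_shift_apply (S : lp (fun _ : ℕ => ℂ) 2 →L[ℂ] lp (fun _ : ℕ => ℂ) 2)
    (hS0 : ∀ ξ : lp (fun _ : ℕ => ℂ) 2, S ξ 0 = 0)
    (hS : ∀ (ξ : lp (fun _ : ℕ => ℂ) 2) (n : ℕ), S ξ (n + 1) = ξ n)
    (ξ : lp (fun _ : ℕ => ℂ) 2) (n : ℕ) : adjoint S ξ n = ξ (n + 1) := by
  have hs : S (lp.single 2 n (1 : ℂ)) = lp.single 2 (n + 1) (1 : ℂ) := by
    ext m
    cases m with
    | zero => rw [hS0]; simp [lp.single_apply]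
    | succ m => rw [hS]; simp [lp.single_apply, Pi.single_apply]
  have h := adjoint_inner_right S (lp.single 2 n (1 : ℂ)) ξ
  rw [hs, lp.inner_single_left, lp.inner_single_left] at h
  simpa using h

/-- `P₀` is positive because it is the positive square `P₀* P₀` of itself. -/
lemma rank_one_nonneg (P₀ : lp (fun _ : ℕ => ℂ) 2 →L[ℂ] lp (fun _ : ℕ => ℂ) 2)
    (hP0 : ∀ ξ : lp (fun _ : ℕ => ℂ) 2, P₀ ξ 0 = ξ 0)
    (hP : ∀ (ξ : lp (fun _ : ℕ => ℂ) 2) (n : ℕ), P₀ ξ (n + 1) = 0) : 0 ≤ P₀ := by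
  have hs (ξ : lp (fun _ : ℕ => ℂ) 2) : P₀ ξ = lp.single 2 0 (ξ 0) := by
    ext m
    cases m with
    | zero => rw [hP0]; simp [lp.single_apply]
    | succ m => rw [hP]; simp [lp.single_apply]
  have h : P₀ = star P₀ * P₀ := by
    ext1 ξ
    refine ext_inner_left ℂ fun η => ?_
    rw [star_eq_adjoint, mul_apply_eq_comp, adjoint_inner_right, hs ξ, hs η,
      lp.inner_single_right, lp.inner_single_right]
    simp [lp.single_apply]
  rw [h]
  exact star_mul_self_nonneg P₀

/-- The spectrum of `T = S + S* - c • P₀` on `ℓ²(ℕ)` is the interval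
`[-2, 2] ⊆ ℝ ⊆ ℂ`. -/
theorem spectrum_shift_minus_rank_one_eq_Icc
    (S P₀ : lp (fun _ : ℕ => ℂ) 2 →L[ℂ] lp (fun _ : ℕ => ℂ) 2)
    (hS0 : ∀ ξ : lp (fun _ : ℕ => ℂ) 2, S ξ 0 = 0)
    (hS : ∀ (ξ : lp (fun _ : ℕ => ℂ) 2) (n : ℕ), S ξ (n + 1) = ξ n)
    (hP0 : ∀ ξ : lp (fun _ : ℕ => ℂ) 2, P₀ ξ 0 = ξ 0)
    (hP : ∀ (ξ : lp (fun _ : ℕ => ℂ) 2) (n : ℕ), P₀ ξ (n + 1) = 0)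
    (c : ℝ) (hc0 : 0 < c) (hc1 : c < 1) :
    spectrum ℂ (S + ContinuousLinearMap.adjoint S - (c : ℂ) • P₀)
      = (fun x : ℝ => (x : ℂ)) '' Set.Icc (-2 : ℝ) 2 := by
  have hA := adjoint_shift_apply S hS0 hS
  have hpos := rank_one_nonneg P₀ hP0 hP
  have hSS : star S * S = 1 := by
    ext ξ n
    rw [star_eq_adjoint, mul_apply_eq_comp, hA, hS, one_apply_eq_self]
  have hSS' : S * star S = 1 - P₀ := by
    ext ξ n
    rw [star_eq_adjoint, mul_apply_eq_comp, sub_apply, one_apply_eq_self, lp.coeFn_sub,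
      Pi.sub_apply]
    cases n with
    | zero => rw [hS0, hP0, sub_self]
    | succ n => rw [hS, hA, hP, sub_zero]
  rw [← star_eq_adjoint]
  set T := S + star S - (c : ℂ) • P₀ with hT
  -- `2 - T = (S - 1)* (S - 1) + c P₀`
  have hup : 0 ≤ 2 - T := by
    have h : 2 - T = star (S - 1) * (S - 1) + (c : ℂ) • P₀ := by
      simp only [hT, star_sub, star_one, sub_mul, mul_sub, hSS, one_mul, mul_one]
      rw [← one_add_one_eq_two (R := lp (fun _ : ℕ => ℂ) 2 →L[ℂ] lp (fun _ : ℕ => ℂ) 2)]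
      abel
    rw [h]
    exact add_nonneg (star_mul_self_nonneg _) (smul_nonneg (by exact_mod_cast hc0.le) hpos)
  -- `(S* + 1)` rather than `(S + 1)`: its square contributes the `- P₀` from `S S* = 1 - P₀`,
  -- leaving the nonnegative multiple `(1 - c) P₀`
  have hlow : 0 ≤ 2 + T := by
    have h : 2 + T = star (star S + 1) * (star S + 1) + ((1 - c : ℝ) : ℂ) • P₀ := by
      simp only [hT, star_add, star_star, star_one, add_mul, mul_add, hSS', one_mul, mul_one,
        Complex.ofReal_sub, Complex.ofReal_one, sub_smul, one_smul]
      rw [← one_add_one_eq_two (R := lp (fun _ : ℕ => ℂ) 2 →L[ℂ] lp (fun _ : ℕ => ℂ) 2)]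
      abel
    rw [h]
    exact add_nonneg (star_mul_self_nonneg _)
      (smul_nonneg (by exact_mod_cast (sub_pos.2 hc1).le) hpos)
  ext z
  constructor
  · intro hz
    have h1 : 2 - z ∈ spectrum ℂ (2 - T) := by
      have h := Set.sub_mem_sub (Set.mem_singleton (2 : ℂ)) hz
      rwa [spectrum.singleton_sub_eq, map_ofNat] at h
    have h2 : 2 + z ∈ spectrum ℂ (2 + T) := by
      have h := Set.add_mem_add (Set.mem_singleton (2 : ℂ)) hz
      rwa [spectrum.singleton_add_eq, map_ofNat] at h
    have h1' := spectrum_nonneg_of_nonneg hup h1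
    have h2' := spectrum_nonneg_of_nonneg hlow h2
    rw [Complex.le_def] at h1' h2'
    simp at h1' h2'
    exact ⟨z.re, ⟨by linarith [h2'.1], by linarith [h1'.1]⟩, by
      apply Complex.ext <;> simp [h2'.2]⟩
  · rintro ⟨x, hx, rfl⟩ hunit
    -- a preimage of `e₀` under `x - T`
    obtain ⟨ξ, hξ⟩ := (isUnit_iff_bijective.1 hunit).2 (lp.single 2 0 (1 : ℂ))
    have hcoord (n : ℕ) : x * ξ n - (S ξ n + ξ (n + 1) - c * P₀ ξ n)
        = (lp.single 2 0 (1 : ℂ) : lp (fun _ : ℕ => ℂ) 2) n := by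
      rw [← hξ, ← hA]
      simp [hT, star_eq_adjoint, -Complex.coe_smul]
      rfl
    have hzero := eq_zero_of_recurrence_of_tendsto_zero ξ x hx (fun n => by
      have h := hcoord (n + 1)
      rw [hS, hP] at h
      simp [lp.single_apply] at h
      linear_combination -h) (lp_two_tendsto_zero ξ)
    have h := hcoord 0
    rw [hS0, hP0, hzero, hzero] at h
    simp [lp.single_apply] at h
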